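/- Let n ≥ 2, k ≥ 2, N > 0, and let {(β_i,θ_i)}_{i=1}^{k+1} be a 1/N-quadrature rule exact for Λ_{n,k}, with nodes -1 ≤ β_1 < ⋯ < β_{k+1} < 1 and weights θ_i > 0, and write (as the exactness guarantees) a_{k+1}·q_{k+1}(t) = P_{k+1}^{1,0}(t) + c_1 P_k^{1,0}(t) + c_2 P_{k-1}^{1,0}(t) + c_3 P_{k-2}^{1,0}(t), where a_j denotes the leading coefficient of P_j^{1,0}. Set r_{k-2} = (∫ (P_{k-2}^{1,0})² dν_n)^{-1} and d_0 = θ_{k+1}·(1-β_{k+1})·q_k(β_{k+1}). Assume P_j^{1,0}(β_{k+1}) > 0 for every j ≤ k-1, and that c_3 > - d_0 · a_{k+1} · a_{k-2} · r_{k-2} · P_{k-1}^{1,0}(β_{k+1}) / a_{k-1} (in particular this holds when c_3 ≥ 0). Then all coefficients d_j in the expansion q_k = ∑_{j=0}^k d_j P_j^{1,0} are positive. -/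

import Mathlib

open MeasureTheory Finset
open scoped Classical

/-- The (unnormalized) Gegenbauer weight `(1 - t²)^((n-3)/2)`. -/
noncomputable def gegWeight (n : ℕ) (t : ℝ) : ℝ := (1 - t ^ 2) ^ (((n : ℝ) - 3) / 2)

/-- Integration against the probability measure `μ_n` on `[-1,1]` with density
proportional to `(1 - t²)^((n-3)/2)`. -/
noncomputable def gegInt (n : ℕ) (f : ℝ → ℝ) : ℝ :=
  (∫ t in Set.Icc (-1 : ℝ) 1, gegWeight n t)⁻¹ *
    ∫ t in Set.Icc (-1 : ℝ) 1, f t * gegWeight n t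

/-- `P : ℕ → ℝ[X]` is the family of Gegenbauer polynomials for dimension `n`:
`deg P_i = i`, `P_i(1) = 1`, pairwise orthogonal in `L²(μ_n)`. -/
def IsGegenbauer (n : ℕ) (P : ℕ → Polynomial ℝ) : Prop :=
  (∀ i, (P i).natDegree = i) ∧ (∀ i, (P i).eval 1 = 1) ∧
    ∀ i j, i ≠ j → gegInt n (fun t => (P i).eval t * (P j).eval t) = 0

/-- A `1/N`-quadrature rule with nodes `α` and weights `ρ`, exact for a set `Λ`
of functions on `[-1,1]`. -/
def IsQuadratureRule (n : ℕ) (N : ℝ) {k : ℕ} (α ρ : Fin k → ℝ)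
    (Λ : Set (ℝ → ℝ)) : Prop :=
  (∀ i, -1 ≤ α i) ∧ (∀ i, α i < 1) ∧ StrictMono α ∧ (∀ i, 0 < ρ i) ∧
    ∀ f ∈ Λ, gegInt n f = f 1 / N + ∑ i, ρ i * f (α i)

/-- Integration against the probability measure `ν_n` on `[-1,1]` with density
proportional to `(1-t)(1 - t²)^((n-3)/2)`. -/
noncomputable def adjInt (n : ℕ) (f : ℝ → ℝ) : ℝ :=
  (∫ t in Set.Icc (-1 : ℝ) 1, (1 - t) * gegWeight n t)⁻¹ *
    ∫ t in Set.Icc (-1 : ℝ) 1, f t * ((1 - t) * gegWeight n t)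

/-- `Q : ℕ → ℝ[X]` is the family of adjacent polynomials `P_i^{1,0}` for dimension `n`:
`deg Q_i = i`, `Q_i(1) = 1`, pairwise orthogonal in `L²(ν_n)`. -/
def IsAdjacent (n : ℕ) (Q : ℕ → Polynomial ℝ) : Prop :=
  (∀ i, (Q i).natDegree = i) ∧ (∀ i, (Q i).eval 1 = 1) ∧
    ∀ i j, i ≠ j → adjInt n (fun t => (Q i).eval t * (Q j).eval t) = 0

/-- Membership of a polynomial in `Λ_{n,k} = 𝒫_{2k-1} ⊕ span{P_{2k+2}, P_{2k+3}}`: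
degree at most `2k+3` and orthogonality to `P_{2k}` and `P_{2k+1}` in `L²(μ_n)`. -/
def InLambda (n k : ℕ) (P : ℕ → Polynomial ℝ) (p : Polynomial ℝ) : Prop :=
  p.natDegree ≤ 2 * k + 3 ∧
    gegInt n (fun t => p.eval t * (P (2 * k)).eval t) = 0 ∧
    gegInt n (fun t => p.eval t * (P (2 * k + 1)).eval t) = 0

/-- The space `Λ_{n,k}`, as a set of functions on `ℝ`. -/
def LambdaSpace (n k : ℕ) (P : ℕ → Polynomial ℝ) : Set (ℝ → ℝ) :=
  {f | ∃ p : Polynomial ℝ, InLambda n k P p ∧ f = fun t => p.eval t}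

open Polynomial in
theorem aux_orth (L : ℝ[X] →ₗ[ℝ] ℝ) (Q : ℕ → ℝ[X]) (hdeg : ∀ i, (Q i).natDegree = i)
    (hne : ∀ i, Q i ≠ 0) (ho : ∀ i j, i ≠ j → L (Q i * Q j) = 0) (j : ℕ) :
    ∀ m ≤ j, ∀ f : ℝ[X], f.degree < (m : ℕ) → L (Q j * f) = 0 := by
  intro m
  induction m with
  | zero =>
    intro _ f hf
    have : f = 0 := by
      rw [← Polynomial.degree_eq_bot]
      simpa using hf
    simp [this]
  | succ m ih =>
    intro hm f hf
    have hlc : (Q m).leadingCoeff ≠ 0 := leadingCoeff_ne_zero.mpr (hne m)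
    have hcm : (Q m).coeff m = (Q m).leadingCoeff := by
      rw [leadingCoeff, hdeg]
    set c := f.coeff m / (Q m).leadingCoeff with hc
    have hg : (f - C c * Q m).degree < (m : ℕ) := by
      rw [degree_lt_iff_coeff_zero]
      intro i hi
      rcases Nat.eq_or_lt_of_le hi with h | h
      · subst h
        rw [coeff_sub, coeff_C_mul, hcm, hc, div_mul_cancel₀ _ hlc, sub_self]
      · rw [coeff_sub, coeff_C_mul]
        rw [degree_lt_iff_coeff_zero] at hf
        rw [hf i h, coeff_eq_zero_of_natDegree_lt (by rw [hdeg]; exact h)]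
        simp
    have h1 := ih (by omega) _ hg
    have h2 : Q j * f = Q j * (f - C c * Q m) + c • (Q j * Q m) := by
      rw [smul_eq_C_mul]; ring
    rw [h2, map_add, h1, map_smul, ho j m (by omega)]
    simp

theorem aux_weight_nonneg (n : ℕ) {t : ℝ} (ht : t ∈ Set.Icc (-1 : ℝ) 1) : 0 ≤ gegWeight n t := by
  unfold gegWeight
  apply Real.rpow_nonneg
  nlinarith [ht.1, ht.2]

theorem aux_weight_pos (n : ℕ) {t : ℝ} (ht : t ∈ Set.Ioo (-1 : ℝ) 1) : 0 < gegWeight n t := by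
  unfold gegWeight
  apply Real.rpow_pos_of_pos
  nlinarith [ht.1, ht.2]

theorem aux_weight_meas (n : ℕ) : Measurable (gegWeight n) := by
  unfold gegWeight
  fun_prop

theorem aux_weight_int (n : ℕ) (hn : 2 ≤ n) :
    IntegrableOn (gegWeight n) (Set.Icc (-1 : ℝ) 1) := by
  have h1 : IntervalIntegrable (fun x : ℝ => x ^ (-1/2 : ℝ)) volume 0 2 :=
    intervalIntegral.intervalIntegrable_rpow' (by norm_num)
  have h2 : IntervalIntegrable (fun x : ℝ => (1 - x) ^ (-1/2 : ℝ)) volume (-1) 1 := by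
    have := (h1.comp_sub_left 1).symm
    norm_num at this ⊢
    exact this
  have h3 : IntervalIntegrable (fun x : ℝ => (1 + x) ^ (-1/2 : ℝ)) volume (-1) 1 := by
    have := (h1.comp_add_left 1)
    norm_num at this ⊢
    exact this
  have h4 := h2.add h3
  rw [intervalIntegrable_iff_integrableOn_Ioo_of_le (by norm_num)] at h4
  rw [integrableOn_Icc_iff_integrableOn_Ioo]
  refine Integrable.mono' h4 (aux_weight_meas n).aestronglyMeasurable ?_
  refine (ae_restrict_iff' measurableSet_Ioo).mpr (Filter.Eventually.of_forall ?_)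
  intro t ht
  rw [Real.norm_of_nonneg (aux_weight_pos n ht).le]
  have hs : (-1/2 : ℝ) ≤ ((n : ℝ) - 3) / 2 := by
    have : (2 : ℝ) ≤ n := by exact_mod_cast hn
    linarith
  have hp : 0 < 1 - t ^ 2 := by nlinarith [ht.1, ht.2]
  have hA : gegWeight n t ≤ (1 - t ^ 2) ^ (-1/2 : ℝ) :=
    Real.rpow_le_rpow_of_exponent_ge hp (by nlinarith) hs
  refine hA.trans ?_
  have p1 : 0 < 1 - t := by linarith [ht.2]
  have p2 : 0 < 1 + t := by linarith [ht.1]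
  have e1 := Real.rpow_pos_of_pos p1 (-1/2 : ℝ)
  have e2 := Real.rpow_pos_of_pos p2 (-1/2 : ℝ)
  rcases le_total 0 t with h | h
  · have : (1 - t ^ 2) ^ (-1/2 : ℝ) ≤ (1 - t) ^ (-1/2 : ℝ) :=
      Real.rpow_le_rpow_of_nonpos p1 (by nlinarith) (by norm_num)
    linarith
  · have : (1 - t ^ 2) ^ (-1/2 : ℝ) ≤ (1 + t) ^ (-1/2 : ℝ) :=
      Real.rpow_le_rpow_of_nonpos p2 (by nlinarith) (by norm_num)
    linarith

theorem aux_mul_int (n : ℕ) (hn : 2 ≤ n) (f : ℝ → ℝ) (hf : Continuous f) :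
    IntegrableOn (fun t => f t * gegWeight n t) (Set.Icc (-1 : ℝ) 1) :=
  (aux_weight_int n hn).continuousOn_mul hf.continuousOn isCompact_Icc

theorem aux_pos (n : ℕ) (hn : 2 ≤ n) (p : Polynomial ℝ) (hp : p ≠ 0)
    (h0 : ∀ t ∈ Set.Icc (-1 : ℝ) 1, 0 ≤ p.eval t) :
    0 < ∫ t in Set.Icc (-1 : ℝ) 1, p.eval t * gegWeight n t := by
  rw [setIntegral_pos_iff_support_of_nonneg_ae]
  · have hsub : Set.Ioo (-1 : ℝ) 1 \ (p.roots.toFinset : Set ℝ) ⊆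
        Function.support (fun t => p.eval t * gegWeight n t) ∩ Set.Icc (-1 : ℝ) 1 := by
      rintro t ⟨ht, hr⟩
      refine ⟨?_, Set.Ioo_subset_Icc_self ht⟩
      have : p.eval t ≠ 0 := by
        intro h
        apply hr
        simp [hp, h]
      exact mul_ne_zero this (aux_weight_pos n ht).ne'
    refine lt_of_lt_of_le ?_ (measure_mono hsub)
    rw [measure_sdiff_null ((Finset.finite_toSet _).measure_zero _)]
    simp
  · refine (ae_restrict_iff' measurableSet_Icc).mpr (Filter.Eventually.of_forall ?_)
    intro t ht
    exact mul_nonneg (h0 t ht) (aux_weight_nonneg n ht)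
  · exact aux_mul_int n hn _ p.continuous

theorem aux_odd (n : ℕ) : ∫ t in Set.Icc (-1 : ℝ) 1, t * gegWeight n t = 0 := by
  rw [integral_Icc_eq_integral_Ioc, ← intervalIntegral.integral_of_le (by norm_num)]
  have h := intervalIntegral.integral_comp_neg (a := -1) (b := 1) (fun t => t * gegWeight n t)
  have h2 : (fun t : ℝ => -t * gegWeight n (-t)) = fun t => -(t * gegWeight n t) := by
    funext t
    simp [gegWeight]
  simp only [neg_neg] at h
  rw [h2, intervalIntegral.integral_neg] at h
  linarith

theorem aux_norm (n : ℕ) (hn : 2 ≤ n) :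
    ∫ t in Set.Icc (-1 : ℝ) 1, (1 - t) * gegWeight n t =
      ∫ t in Set.Icc (-1 : ℝ) 1, gegWeight n t := by
  have : ∀ t : ℝ, (1 - t) * gegWeight n t = gegWeight n t - t * gegWeight n t := by
    intro t; ring
  simp only [this]
  rw [integral_sub (aux_weight_int n hn) (aux_mul_int n hn (fun t => t) continuous_id), aux_odd, sub_zero]

/-- Gegenbauer integration as a linear functional on polynomials. -/
noncomputable def auxG (n : ℕ) (hn : 2 ≤ n) : Polynomial ℝ →ₗ[ℝ] ℝ where
  toFun p := gegInt n (fun t => p.eval t)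
  map_add' p q := by
    simp only [gegInt, Polynomial.eval_add, add_mul]
    rw [integral_add (aux_mul_int n hn _ p.continuous) (aux_mul_int n hn _ q.continuous)]
    ring
  map_smul' c p := by
    simp only [gegInt, Polynomial.eval_smul, smul_eq_mul, mul_assoc, RingHom.id_apply]
    rw [integral_const_mul]
    ring

theorem auxG_pos (n : ℕ) (hn : 2 ≤ n) (p : Polynomial ℝ) (hp : p ≠ 0)
    (h0 : ∀ t ∈ Set.Icc (-1 : ℝ) 1, 0 ≤ p.eval t) : 0 < auxG n hn p := by
  have h1 := aux_pos n hn 1 one_ne_zero (by simp)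
  simp only [Polynomial.eval_one, one_mul] at h1
  exact mul_pos (inv_pos.mpr h1) (aux_pos n hn p hp h0)

/-- Adjacent integration as a linear functional on polynomials. -/
noncomputable def auxA (n : ℕ) (hn : 2 ≤ n) : Polynomial ℝ →ₗ[ℝ] ℝ :=
  auxG n hn ∘ₗ LinearMap.mulLeft ℝ (1 - Polynomial.X)

theorem auxA_eq (n : ℕ) (hn : 2 ≤ n) (p : Polynomial ℝ) :
    auxA n hn p = adjInt n (fun t => p.eval t) := by
  change gegInt n (fun t => ((1 - Polynomial.X) * p).eval t) = _
  simp only [gegInt, adjInt, aux_norm n hn]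
  congr 2
  funext t
  simp
  ring

theorem auxA_pos (n : ℕ) (hn : 2 ≤ n) (p : Polynomial ℝ) (hp : p ≠ 0)
    (h0 : ∀ t ∈ Set.Icc (-1 : ℝ) 1, 0 ≤ p.eval t) : 0 < auxA n hn p := by
  refine auxG_pos n hn ((1 - Polynomial.X) * p) (mul_ne_zero ?_ hp) ?_
  · intro h
    have := congrArg (Polynomial.eval 0) h
    simp at this
  · intro t ht
    simp only [Polynomial.eval_mul, Polynomial.eval_sub, Polynomial.eval_one, Polynomial.eval_X]
    exact mul_nonneg (by linarith [ht.2]) (h0 t ht)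

open Polynomial in
theorem aux_lc_pos (n : ℕ) (hn : 2 ≤ n) (Q : ℕ → ℝ[X]) (hdeg : ∀ i, (Q i).natDegree = i)
    (h1 : ∀ i, (Q i).eval 1 = 1)
    (ho : ∀ i j, i ≠ j → auxA n hn (Q i * Q j) = 0) (j : ℕ) : 0 < (Q j).leadingCoeff := by
  have hne : ∀ i, Q i ≠ 0 := by
    intro i h
    have := h1 i
    simp [h] at this
  by_contra hlc
  push Not at hlc
  have hlc' : (Q j).leadingCoeff < 0 := lt_of_le_of_ne hlc (leadingCoeff_ne_zero.mpr (hne j))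
  have hjpos : 0 < (Q j).degree := by
    rw [← natDegree_pos_iff_degree_pos]
    rcases Nat.eq_zero_or_pos (Q j).natDegree with h | h
    · exfalso
      have h2 := h1 j
      rw [eq_C_of_natDegree_eq_zero h] at h2
      rw [leadingCoeff, h] at hlc'
      simp at h2
      linarith
    · exact h
  have ht := (Q j).tendsto_atBot_of_leadingCoeff_nonpos hjpos hlc
  obtain ⟨y, hy0, hy1⟩ := ((ht.eventually (Filter.eventually_le_atBot 0)).and
    (Filter.eventually_ge_atTop 1)).exists
  obtain ⟨x, hx, hx0⟩ := intermediate_value_Icc' hy1 (Q j).continuous.continuousOn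
    (show (0 : ℝ) ∈ Set.Icc _ _ from ⟨hy0, by rw [h1]; norm_num⟩)
  obtain ⟨g, hg⟩ := dvd_iff_isRoot.mpr (show (Q j).IsRoot x from hx0)
  have hgne : g ≠ 0 := by
    rintro rfl
    exact hne j (by simpa using hg)
  have hgd : g.degree < (j : ℕ) := by
    have h3 := congrArg natDegree hg
    rw [natDegree_mul (X_sub_C_ne_zero x) hgne, natDegree_X_sub_C, hdeg] at h3
    rw [degree_eq_natDegree hgne]
    exact_mod_cast (by omega)
  have h0 := aux_orth (auxA n hn) Q hdeg hne ho j j le_rfl g hgd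
  have hp := auxA_pos n hn (-(Q j * g)) (neg_ne_zero.mpr (mul_ne_zero (hne j) hgne)) (by
    intro t ht
    rw [hg]
    simp only [eval_neg, eval_mul, eval_sub, eval_X, eval_C]
    have : 0 ≤ x - t := by linarith [hx.1, ht.2]
    nlinarith [mul_nonneg this (mul_self_nonneg (eval t g))])
  rw [map_neg, h0] at hp
  simp at hp

/-- positivity of the coefficients of the partial product `q_k` in the
adjacent basis. -/
theorem stmt_11 (n : ℕ) (hn : 2 ≤ n) (k : ℕ) (hk : 2 ≤ k) (N : ℝ) (hN : 0 < N)
    (P : ℕ → Polynomial ℝ) (hP : IsGegenbauer n P)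
    (Q : ℕ → Polynomial ℝ) (hQadj : IsAdjacent n Q)
    (β θ : Fin (k + 1) → ℝ)
    (hquad : IsQuadratureRule n N β θ (LambdaSpace n k P))
    (c₁ c₂ c₃ : ℝ)
    (hexp : Polynomial.C (Q (k + 1)).leadingCoeff *
        (∏ i, (Polynomial.X - Polynomial.C (β i))) =
      Q (k + 1) + Polynomial.C c₁ * Q k + Polynomial.C c₂ * Q (k - 1) +
        Polynomial.C c₃ * Q (k - 2))
    (hβpos : ∀ j ≤ k - 1, 0 < (Q j).eval (β (Fin.last k)))
    (hc₃ : c₃ >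
      -(θ (Fin.last k) * (1 - β (Fin.last k)) *
          (∏ i ∈ Finset.univ.filter (fun i : Fin (k + 1) => (i : ℕ) < k),
            (β (Fin.last k) - β i)) *
          (Q (k + 1)).leadingCoeff * (Q (k - 2)).leadingCoeff *
          (adjInt n (fun t => ((Q (k - 2)).eval t) ^ 2))⁻¹ *
          (Q (k - 1)).eval (β (Fin.last k))) /
        (Q (k - 1)).leadingCoeff)
    (d : ℕ → ℝ)
    (hd : (∏ i ∈ Finset.univ.filter (fun i : Fin (k + 1) => (i : ℕ) < k),
        (Polynomial.X - Polynomial.C (β i))) =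
      ∑ j ∈ Finset.range (k + 1), Polynomial.C (d j) * Q j) :
    ∀ j ≤ k, 0 < d j := by
  obtain ⟨m, rfl⟩ : ∃ m, k = m + 2 := ⟨k - 2, by omega⟩
  obtain ⟨hPdeg, hP1, hPo⟩ := hP
  obtain ⟨hQdeg, hQ1, hQo⟩ := hQadj
  obtain ⟨hβ1, hβ2, hmono, hθ, hex⟩ := hquad
  simp only [show m + 2 - 1 = m + 1 by omega, show m + 2 - 2 = m by omega] at *
  set L := auxA n hn with hL
  set b := β (Fin.last (m + 2)) with hb
  have hPne : ∀ i, P i ≠ 0 := by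
    intro i h
    have := hP1 i
    simp [h] at this
  have hQne : ∀ i, Q i ≠ 0 := by
    intro i h
    have := hQ1 i
    simp [h] at this
  have hGo : ∀ i j, i ≠ j → auxG n hn (P i * P j) = 0 := by
    intro i j hij
    have := hPo i j hij
    simp only [← Polynomial.eval_mul] at this
    exact this
  have hLo : ∀ i j, i ≠ j → L (Q i * Q j) = 0 := by
    intro i j hij
    have := hQo i j hij
    simp only [← Polynomial.eval_mul] at this
    rw [hL, auxA_eq]
    exact this
  have hlc := aux_lc_pos n hn Q hQdeg hQ1 hLo
  have hsq : ∀ j, 0 < L (Q j * Q j) := by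
    intro j
    refine auxA_pos n hn _ (mul_ne_zero (hQne j) (hQne j)) ?_
    intro t _
    rw [Polynomial.eval_mul]
    exact mul_self_nonneg _
  have hfilt : ∀ {M : Type} [CommMonoid M] (f : Fin (m + 2 + 1) → M),
      ∏ i ∈ Finset.univ.filter (fun i : Fin (m + 2 + 1) => (i : ℕ) < m + 2), f i =
        ∏ i : Fin (m + 2), f i.castSucc := by
    intro M _ f
    rw [Finset.prod_filter, Fin.prod_univ_castSucc]
    simp
  rw [hfilt] at hd hc₃
  rw [Fin.prod_univ_castSucc] at hexp
  set q : Polynomial ℝ := ∏ i : Fin (m + 2), (Polynomial.X - Polynomial.C (β i.castSucc)) with hq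
  have hqb : ∏ i : Fin (m + 2), (b - β i.castSucc) = q.eval b := by
    rw [hq, Polynomial.eval_prod]
    simp
  rw [hqb] at hc₃
  have hqbpos : 0 < q.eval b := by
    rw [← hqb]
    refine Finset.prod_pos fun i _ => ?_
    have := hmono (Fin.castSucc_lt_last i)
    linarith
  have hqmonic : q.Monic := Polynomial.monic_prod_of_monic _ _ fun i _ => Polynomial.monic_X_sub_C _
  have hqdeg : q.natDegree = m + 2 := by
    rw [hq, Polynomial.natDegree_prod_of_monic _ _ fun i _ => Polynomial.monic_X_sub_C _]
    simp
  set D := θ (Fin.last (m + 2)) * (1 - b) * q.eval b with hD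
  have hDpos : 0 < D := mul_pos (mul_pos (hθ _) (by linarith [hβ2 (Fin.last (m + 2))])) hqbpos
  -- the quadrature rule applied to q * f
  have key : ∀ f : Polynomial ℝ, f.natDegree ≤ m → L (q * f) = D * f.eval b := by
    intro f hf
    set p : Polynomial ℝ := (1 - Polynomial.X) * (q * f) with hp
    have hpd : p.natDegree ≤ 2 * m + 3 := by
      have e1 : (1 - Polynomial.X : Polynomial ℝ).natDegree ≤ 1 := by
        compute_degree
      have e2 := Polynomial.natDegree_mul_le (p := q) (q := f)
      have e3 := Polynomial.natDegree_mul_le (p := (1 - Polynomial.X : Polynomial ℝ)) (q := q * f)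
      rw [hp]
      omega
    have hpP : ∀ j, 2 * m + 4 ≤ j → gegInt n (fun t => p.eval t * (P j).eval t) = 0 := by
      intro j hj
      have := aux_orth (auxG n hn) P hPdeg hPne hGo j j le_rfl p (by
        refine lt_of_le_of_lt Polynomial.degree_le_natDegree ?_
        exact_mod_cast (by omega))
      rw [mul_comm] at this
      simp only [← Polynomial.eval_mul]
      exact this
    have h := hex (fun t => p.eval t) ⟨p, ⟨by omega, hpP _ (by omega), hpP _ (by omega)⟩, rfl⟩
    change L (q * f) = _ at h
    rw [h, Fin.sum_univ_castSucc]
    have hz : ∀ i : Fin (m + 2), q.eval (β i.castSucc) = 0 := by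
      intro i
      rw [hq, Polynomial.eval_prod]
      exact Finset.prod_eq_zero (Finset.mem_univ i) (by simp)
    simp only [hp, Polynomial.eval_mul, hz, Polynomial.eval_sub, Polynomial.eval_one,
      Polynomial.eval_X, hD]
    simp
    ring
  have hdj : ∀ j ≤ m + 2, L (q * Q j) = d j * L (Q j * Q j) := by
    intro j hj
    rw [hd, Finset.sum_mul, map_sum, Finset.sum_eq_single j]
    · rw [mul_assoc, ← Polynomial.smul_eq_C_mul, map_smul, smul_eq_mul]
    · intro i _ hij
      rw [mul_assoc, ← Polynomial.smul_eq_C_mul, map_smul, hLo i j hij, smul_zero]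
    · intro h
      exact absurd (Finset.mem_range.mpr (by omega)) h
  intro j hj
  have hcases : j ≤ m ∨ j = m + 1 ∨ j = m + 2 := by omega
  rcases hcases with h | rfl | rfl
  · have h1 := hdj j hj
    rw [key _ (by rw [hQdeg]; exact h)] at h1
    have h2 := mul_pos hDpos (hβpos j (by omega))
    rw [h1] at h2
    exact (pos_iff_pos_of_mul_pos h2).mpr (hsq j)
  · set a0 := (Q m).leadingCoeff with ha0
    set a1 := (Q (m + 1)).leadingCoeff with ha1
    set a3 := (Q (m + 2 + 1)).leadingCoeff with ha3
    have p0 : 0 < a0 := hlc m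
    have p1 : 0 < a1 := hlc (m + 1)
    have p3 : 0 < a3 := hlc (m + 2 + 1)
    set R : Polynomial ℝ := (Polynomial.X - Polynomial.C b) * Q m -
      Polynomial.C (a0 / a1) * Q (m + 1) with hR
    have hRd : R.natDegree ≤ m := by
      rw [Polynomial.natDegree_le_iff_coeff_eq_zero]
      intro i hi
      obtain ⟨i, rfl⟩ : ∃ i', i = i' + 1 := ⟨i - 1, by omega⟩
      rw [hR, Polynomial.coeff_sub, sub_mul, Polynomial.coeff_sub, Polynomial.coeff_X_mul,
        Polynomial.coeff_C_mul, Polynomial.coeff_C_mul,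
        Polynomial.coeff_eq_zero_of_natDegree_lt (n := i + 1) (p := Q m) (by rw [hQdeg]; exact hi)]
      rcases Nat.eq_or_lt_of_le (Nat.lt_succ_iff.mp hi) with h | h
      · subst h
        have e0 : (Q m).coeff m = a0 := by rw [ha0, Polynomial.leadingCoeff, hQdeg]
        have e1 : (Q (m + 1)).coeff (m + 1) = a1 := by rw [ha1, Polynomial.leadingCoeff, hQdeg]
        rw [e0, e1]
        field_simp
        ring
      · rw [Polynomial.coeff_eq_zero_of_natDegree_lt (by rw [hQdeg]; exact h),
          Polynomial.coeff_eq_zero_of_natDegree_lt (by rw [hQdeg]; omega)]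
        ring
    have hkR := key R hRd
    have hReval : R.eval b = -(a0 / a1 * (Q (m + 1)).eval b) := by
      simp [hR]
    -- pair the expansion with Q m
    have hpair := congrArg (fun f => L (f * Q m)) hexp
    simp only [add_mul, mul_assoc, smul_mul_assoc, ← Polynomial.smul_eq_C_mul, map_add, map_smul,
      hLo (m + 2 + 1) m (by omega), hLo (m + 2) m (by omega), hLo (m + 1) m (by omega),
      smul_eq_mul, mul_zero, add_zero, zero_add] at hpair
    have hsplit : q * ((Polynomial.X - Polynomial.C b) * Q m) =
        q * R + (a0 / a1) • (q * Q (m + 1)) := by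
      rw [hR, Polynomial.smul_eq_C_mul]; ring
    rw [hsplit, map_add, map_smul, hkR, hReval, hdj (m + 1) (by omega), smul_eq_mul] at hpair
    have hadj : adjInt n (fun t => ((Q m).eval t) ^ 2) = L (Q m * Q m) := by
      rw [hL, auxA_eq]
      simp only [Polynomial.eval_mul, sq]
    rw [hadj] at hc₃
    have s0 := hsq m
    have s1 := hsq (m + 1)
    set S0 := L (Q m * Q m)
    set S1 := L (Q (m + 1) * Q (m + 1))
    set e := (Q (m + 1)).eval b
    have hfin : 0 < a3 * (a0 / a1) * (d (m + 1) * S1) := by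
      have h1 : a3 * (a0 / a1) * (d (m + 1) * S1) = c₃ * S0 + a3 * D * (a0 / a1) * e := by
        linarith
      have h2 : -(D * a3 * a0 * S0⁻¹ * e) / a1 * S0 = -(a3 * D * (a0 / a1) * e) := by
        field_simp
      have h3 := mul_lt_mul_of_pos_right hc₃ s0
      linarith
    have h4 : 0 < d (m + 1) * S1 :=
      (pos_iff_pos_of_mul_pos hfin).mp (by positivity)
    exact (pos_iff_pos_of_mul_pos h4).mpr s1
  · have h1 := congrArg (fun f => Polynomial.coeff f (m + 2)) hd
    simp only [Polynomial.finsetSum_coeff, Polynomial.coeff_C_mul] at h1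
    rw [Finset.sum_eq_single (m + 2)] at h1
    · have e1 : q.coeff (m + 2) = 1 := by
        rw [← hqdeg]; exact hqmonic
      have e2 : (Q (m + 2)).coeff (m + 2) = (Q (m + 2)).leadingCoeff := by
        rw [Polynomial.leadingCoeff, hQdeg]
      rw [e1, e2] at h1
      have h2 : 0 < d (m + 2) * (Q (m + 2)).leadingCoeff := by rw [← h1]; norm_num
      exact (pos_iff_pos_of_mul_pos h2).mpr (hlc _)
    · intro i hi hne
      rw [Finset.mem_range] at hi
      rw [Polynomial.coeff_eq_zero_of_natDegree_lt (by rw [hQdeg]; omega), mul_zero]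
    · intro h
      exact absurd (Finset.mem_range.mpr (by omega)) h
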